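/- arXiv:1407.1502 — 2 statements merged into one kernel-verified Lean document; each statement's English description precedes it below -/
import Mathlib

section
/- Let W ⊆ ℝⁿ be an open convex set and let f : ℝⁿ → ℝⁿ be continuously differentiable on W such that, at every point a ∈ W, all off-diagonal entries of the Jacobian matrix of f at a are nonnegative (the Jacobian is Metzler). Then for any x, y ∈ W with x ≤ y componentwise and x_i = y_i for some index i ∈ {1,…,n}, one has f_i(x) ≤ f_i(y). -/
open Set

/-- If `f` is continuously differentiable on the open convex set `W` with
Metzler Jacobian at every point of `W`, then for `x ≤ y` in `W` with `x i = y i`,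
one has `f x i ≤ f y i`. -/
theorem offDiagonal_monotone (n : ℕ) (hn : 1 ≤ n)
    (W : Set (Fin n → ℝ)) (hWo : IsOpen W) (hWc : Convex ℝ W)
    (f : (Fin n → ℝ) → (Fin n → ℝ)) (hf : ContDiffOn ℝ 1 f W)
    (hMetzler : ∀ a ∈ W, ∀ i j : Fin n, i ≠ j → 0 ≤ fderiv ℝ f a (Pi.single j 1) i)
    (x y : Fin n → ℝ) (hx : x ∈ W) (hy : y ∈ W) (hxy : x ≤ y)
    (i : Fin n) (hi : x i = y i) :
    f x i ≤ f y i := by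
  have hd : ∀ a ∈ W, HasFDerivWithinAt (fun z => f z i)
      ((ContinuousLinearMap.proj (R := ℝ) (φ := fun _ : Fin n => ℝ) i).comp (fderiv ℝ f a)) W a := by
    intro a ha
    have h1 : DifferentiableAt ℝ f a :=
      (hf.differentiableOn (by norm_num)).differentiableAt (hWo.mem_nhds ha)
    exact (hasFDerivAt_pi'.1 h1.hasFDerivAt i).hasFDerivWithinAt
  obtain ⟨z, hz, h⟩ := domain_mvt hd hWc hx hy
  have hzW : z ∈ W := hWc.segment_subset hx hy hz
  have hsum : y - x = ∑ j, (y j - x j) • (Pi.single j (1 : ℝ) : Fin n → ℝ) := by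
    ext k
    simp [Finset.sum_apply, Pi.single_apply]
  have h0 : 0 ≤ fderiv ℝ f z (y - x) i := by
    rw [hsum, map_sum, Finset.sum_apply]
    refine Finset.sum_nonneg fun j _ => ?_
    rw [map_smul, Pi.smul_apply, smul_eq_mul]
    by_cases hij : i = j
    · subst hij
      simp [hi]
    · exact mul_nonneg (sub_nonneg.2 (hxy j)) (hMetzler z hzW i j hij)
  have h2 : f y i - f x i = fderiv ℝ f z (y - x) i := h
  linarith
end

section
/- Let A ∈ ℝ^{n×n} be Metzler and B ∈ ℝ^{n×n} be entrywise nonnegative. Then there exists a vector v ∈ ℝⁿ with v > 0 and (A + B)v < 0 (strict componentwise) if and only if every differentiable function x : [0,∞) → ℝⁿ satisfying x'(t) = (A + B) x(t) for all t ≥ 0 converges to 0 as t → ∞. -/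
open Set Filter

/-- A matrix is *Metzler* if all its off-diagonal entries are nonnegative. -/
def Metzler (n : ℕ) (A : Matrix (Fin n) (Fin n) ℝ) : Prop :=
  ∀ i j : Fin n, i ≠ j → 0 ≤ A i j

lemma aux_sum_shift {n : ℕ} (M : Matrix (Fin n) (Fin n) ℝ) (c : ℝ) (x : Fin n → ℝ) (i : Fin n) :
    ∑ j, (M i j + if i = j then c else 0) * x j = M.mulVec x i + c * x i := by
  simp [add_mul, Finset.sum_add_distrib, Matrix.mulVec, dotProduct]

lemma aux_shift_nonneg {n : ℕ} (M : Matrix (Fin n) (Fin n) ℝ)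
    (hM : ∀ i j, i ≠ j → 0 ≤ M i j) :
    ∃ c : ℝ, ∀ i j, 0 ≤ M i j + if i = j then c else 0 := by
  refine ⟨∑ i, |M i i|, fun i j => ?_⟩
  by_cases h : i = j
  · subst h
    have h1 : |M i i| ≤ ∑ i, |M i i| :=
      Finset.single_le_sum (f := fun i => |M i i|) (fun k _ => abs_nonneg _) (Finset.mem_univ i)
    have := neg_abs_le (M i i)
    simp only [if_true]
    linarith
  · simpa [h] using hM i j h

lemma aux_forward {n : ℕ} (hn : 1 ≤ n) (M : Matrix (Fin n) (Fin n) ℝ)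
    (hM : ∀ i j, i ≠ j → 0 ≤ M i j) (v : Fin n → ℝ) (hv : ∀ i, 0 < v i)
    (hMv : ∀ i, M.mulVec v i < 0) (x : ℝ → (Fin n → ℝ))
    (hx : ∀ t : ℝ, 0 ≤ t → HasDerivWithinAt x (M.mulVec (x t)) (Set.Ici 0) t) :
    Filter.Tendsto x Filter.atTop (nhds 0) := by
  obtain ⟨c, hc⟩ := aux_shift_nonneg M hM
  have : Nonempty (Fin n) := ⟨⟨0, hn⟩⟩
  obtain ⟨ε, hε, hεv⟩ : ∃ ε : ℝ, 0 < ε ∧ ∀ i, M.mulVec v i ≤ -ε * v i := by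
    obtain ⟨k, -, hk⟩ := Finset.exists_min_image Finset.univ (fun i => -(M.mulVec v i) / v i)
      Finset.univ_nonempty
    refine ⟨-(M.mulVec v k) / v k, div_pos (by linarith [hMv k]) (hv k), fun i => ?_⟩
    have := hk i (Finset.mem_univ i)
    rw [le_div_iff₀ (hv i)] at this
    linarith
  set z : ℝ → (Fin n → ℝ) := fun t i => Real.exp (c * t) * x t i / v i with hz
  set z' : ℝ → (Fin n → ℝ) := fun t i =>
    ∑ j, ((M i j + if i = j then c else 0) * v j / v i) * z t j with hz'
  have hzd : ∀ t : ℝ, 0 ≤ t → HasDerivWithinAt z (z' t) (Set.Ici 0) t := by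
    intro t ht
    rw [hasDerivWithinAt_pi]
    intro i
    have h1 := (hasDerivWithinAt_pi.1 (hx t ht)) i
    have h2 : HasDerivWithinAt (fun t => Real.exp (c * t)) (Real.exp (c * t) * c) (Set.Ici 0) t := by
      simpa using (((hasDerivAt_id t).const_mul c).exp).hasDerivWithinAt
    have h3 := (h2.mul h1).div_const (v i)
    refine h3.congr_deriv ?_
    have h4 : z' t i = (Real.exp (c * t) / v i) *
        ∑ j, (M i j + if i = j then c else 0) * x t j := by
      rw [Finset.mul_sum]
      refine Finset.sum_congr rfl fun j _ => ?_
      have := (hv j).ne'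
      have := (hv i).ne'
      simp only [hz]
      field_simp
    rw [h4, aux_sum_shift]
    ring
  have hbd : ∀ t, ‖z' t‖ ≤ (c - ε) * ‖z t‖ := by
    intro t
    rw [pi_norm_le_iff_of_nonempty]
    intro i
    calc ‖z' t i‖ ≤ ∑ j, ((M i j + if i = j then c else 0) * v j / v i) * ‖z t‖ := by
          refine (norm_sum_le _ _).trans (Finset.sum_le_sum fun j _ => ?_)
          have h0 : 0 ≤ (M i j + if i = j then c else 0) * v j / v i :=
            div_nonneg (mul_nonneg (hc i j) (hv j).le) (hv i).le
          rw [norm_mul, Real.norm_of_nonneg h0]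
          exact mul_le_mul_of_nonneg_left (norm_le_pi_norm _ j) h0
      _ = ((M.mulVec v i + c * v i) / v i) * ‖z t‖ := by
          rw [← Finset.sum_mul, ← Finset.sum_div, aux_sum_shift]
      _ ≤ _ := by
          refine mul_le_mul_of_nonneg_right ?_ (norm_nonneg _)
          rw [div_le_iff₀ (hv i)]
          linarith [hεv i]
  have hg : ∀ T : ℝ, 0 ≤ T → ‖z T‖ ≤ ‖z 0‖ * Real.exp ((c - ε) * T) := by
    intro T hT
    have := norm_le_gronwallBound_of_norm_deriv_right_le (f := z) (f' := z') (δ := ‖z 0‖)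
      (K := c - ε) (ε := 0) (a := 0) (b := T)
      (fun t ht => ((hzd t ht.1).continuousWithinAt).mono Set.Icc_subset_Ici_self)
      (fun t ht => (hzd t ht.1).mono (Set.Ici_subset_Ici.2 ht.1)) le_rfl
      (fun t _ => by simpa using hbd t) T ⟨hT, le_rfl⟩
    simpa [gronwallBound_ε0] using this
  rw [tendsto_pi_nhds]
  intro i
  have hlim : Filter.Tendsto (fun T : ℝ => (v i * ‖z 0‖) * Real.exp (-(ε * T))) Filter.atTop
      (nhds 0) := by
    have : Filter.Tendsto (fun T : ℝ => Real.exp (-(ε * T))) Filter.atTop (nhds 0) :=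
      Real.tendsto_exp_neg_atTop_nhds_zero.comp (Filter.tendsto_id.const_mul_atTop hε)
    simpa using this.const_mul (v i * ‖z 0‖)
  refine squeeze_zero_norm' ?_ hlim
  filter_upwards [Filter.eventually_ge_atTop 0] with T hT
  have hxz : x T i = v i * Real.exp (-(c * T)) * z T i := by
    have := (hv i).ne'
    simp only [hz, Real.exp_neg]
    field_simp
  have h5 : ‖z T i‖ ≤ ‖z 0‖ * Real.exp ((c - ε) * T) := (norm_le_pi_norm _ i).trans (hg T hT)
  have h6 : 0 ≤ v i * Real.exp (-(c * T)) := mul_nonneg (hv i).le (Real.exp_pos _).le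
  rw [hxz, norm_mul, Real.norm_of_nonneg h6]
  refine (mul_le_mul_of_nonneg_left h5 h6).trans_eq ?_
  rw [show -(ε * T) = -(c * T) + (c - ε) * T by ring, Real.exp_add]
  ring

lemma aux_exists_sol {n : ℕ} (M : Matrix (Fin n) (Fin n) ℝ)
    (hM : ∀ i j, i ≠ j → 0 ≤ M i j) :
    ∃ u : ℝ → (Fin n → ℝ), (∀ t, HasDerivAt u (M.mulVec (u t)) t) ∧ (u 0 = fun _ => 1) ∧
      ∀ t, 0 ≤ t → ∀ i, 0 < u t i := by
  obtain ⟨c, hc⟩ := aux_shift_nonneg M hM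
  let P : Matrix (Fin n) (Fin n) ℝ := fun i j => M i j + if i = j then c else 0
  let L : (Fin n → ℝ) →L[ℝ] (Fin n → ℝ) := LinearMap.toContinuousLinearMap (Matrix.mulVecLin P)
  have hL : ∀ y i, L y i = M.mulVec y i + c * y i := fun y i => aux_sum_shift M c y i
  let o : Fin n → ℝ := fun _ => 1
  refine ⟨fun t => Real.exp (-(c * t)) • (NormedSpace.exp (t • L)) o, ?_, ?_, ?_⟩
  · intro t
    have h1 : HasDerivAt (fun t : ℝ => Real.exp (-(c * t))) (Real.exp (-(c * t)) * (-c)) t := by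
      simpa using (((hasDerivAt_id t).const_mul c).neg).exp
    have h2 : HasDerivAt (fun t : ℝ => (NormedSpace.exp (t • L)) o)
        (L ((NormedSpace.exp (t • L)) o)) t := by
      have := hasDerivAt_exp_smul_const' (𝕂 := ℝ) L t
      simpa using this.clm_apply (hasDerivAt_const t o)
    refine (h1.smul h2).congr_deriv ?_
    funext i
    simp only [Pi.add_apply, Pi.smul_apply, smul_eq_mul, hL, Matrix.mulVec_smul]
    ring
  · simp [o]
  · intro t ht i
    have hpow : ∀ k : ℕ, ∀ j, 0 ≤ ((L ^ k) o) j := by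
      intro k
      induction k with
      | zero => intro j; simp [o]
      | succ k ih =>
        intro j
        rw [pow_succ']
        have h7 : (L * L ^ k) o j = ∑ l, (M j l + if j = l then c else 0) * ((L ^ k) o) l := rfl
        rw [h7]
        exact Finset.sum_nonneg fun l _ => mul_nonneg (hc j l) (ih l)
    have hs := NormedSpace.exp_series_hasSum_exp' (𝕂 := ℝ) (t • L)
    have hs2 := hs.mapL ((ContinuousLinearMap.proj (R := ℝ) (φ := fun _ : Fin n => ℝ) i).comp
      (ContinuousLinearMap.apply ℝ (Fin n → ℝ) o))
    have h1 := le_hasSum hs2 0 (fun k _ => by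
      simp only [smul_pow, ContinuousLinearMap.comp_apply, ContinuousLinearMap.apply_apply,
        _root_.smul_apply, ContinuousLinearMap.proj_apply, Pi.smul_apply, smul_eq_mul]
      have := hpow k i
      positivity)
    have h2 : (1 : ℝ) ≤ (NormedSpace.exp (t • L)) o i := by simpa [o] using h1
    exact mul_pos (Real.exp_pos _) (by linarith)

theorem positive_linear_undelayed_gas (n : ℕ) (hn : 1 ≤ n)
    (A B : Matrix (Fin n) (Fin n) ℝ)
    (hA : Metzler n A) (hB : ∀ i j : Fin n, 0 ≤ B i j) :
    (∃ v : Fin n → ℝ, (∀ i, 0 < v i) ∧ ∀ i, (A + B).mulVec v i < 0) ↔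
      ∀ x : ℝ → (Fin n → ℝ),
        (∀ t : ℝ, 0 ≤ t → HasDerivWithinAt x ((A + B).mulVec (x t)) (Set.Ici 0) t) →
        Filter.Tendsto x Filter.atTop (nhds 0) := by
  have hM : ∀ i j, i ≠ j → 0 ≤ (A + B) i j := fun i j h => add_nonneg (hA i j h) (hB i j)
  generalize A + B = M at hM ⊢
  constructor
  · rintro ⟨v, hv, hMv⟩ x hx
    exact aux_forward hn M hM v hv hMv x hx
  · intro h
    obtain ⟨u, hu, hu0, hpos⟩ := aux_exists_sol M hM
    have hlim := h u fun t _ => (hu t).hasDerivWithinAt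
    rw [tendsto_pi_nhds] at hlim
    have hev : ∀ᶠ T in Filter.atTop, ∀ i, u T i < 1 :=
      Filter.eventually_all.2 fun i => (hlim i).eventually_lt_const (by simp)
    obtain ⟨T, hT, hT0⟩ := (hev.and (Filter.eventually_gt_atTop 0)).exists
    have huc : Continuous u := continuous_iff_continuousAt.2 fun t => (hu t).continuousAt
    have huci : ∀ i, Continuous fun t => u t i := fun i => (continuous_apply i).comp huc
    refine ⟨fun i => ∫ t in (0:ℝ)..T, u t i, fun i => ?_, fun i => ?_⟩
    · exact intervalIntegral.intervalIntegral_pos_of_pos_on ((huci i).intervalIntegrable _ _)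
        (fun t ht => hpos t ht.1.le i) hT0
    · have h1 : M.mulVec (fun i => ∫ t in (0:ℝ)..T, u t i) i
          = ∫ t in (0:ℝ)..T, M.mulVec (u t) i := by
        simp only [Matrix.mulVec, dotProduct]
        rw [intervalIntegral.integral_finsetSum]
        · simp
        · exact fun j _ => (((huci j).const_mul _).intervalIntegrable _ _)
      have h2 : ∫ t in (0:ℝ)..T, M.mulVec (u t) i = u T i - u 0 i := by
        refine intervalIntegral.integral_eq_sub_of_hasDerivAt (f := fun t => u t i)
          (fun t _ => hasDerivAt_pi.1 (hu t) i) ?_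
        refine Continuous.intervalIntegrable ?_ _ _
        simp only [Matrix.mulVec, dotProduct]
        exact continuous_finsetSum _ fun j _ => (huci j).const_mul _
      rw [h1, h2, hu0]
      linarith [hT i]
end
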